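/- Let q be a prime power and let 4 ≤ h ≤ k be integers. Let f(x) = a_1x_1 + ⋯ + a_hx_h be a nonzero linear form on 𝔽_q^k supported on the first h coordinates, and suppose that the nonzero coefficients among a_1, …, a_h take exactly l distinct values, with multiplicities r_1, …, r_l (so s := r_1 + ⋯ + r_l ≥ 1 is the number of nonzero coefficients and s ≤ h). Then the number of x = (x_1, …, x_k) ∈ 𝔽_q^k satisfying both f(x) = 0 and (x_1 + ⋯ + x_h)·x_1·⋯·x_h = 0 equals q^{k−1} − (q−1)^{h−s}·q^{k−h}·ψ_s + q^{k−h}·A_{r_1,…,r_l,h−s}. -/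

import Mathlib

/-- `ψ_s = ((q-1)^s + (-1)^s (q-1))/q` (an exact integer division). -/
def psi (q s : ℕ) : ℤ := (((q : ℤ) - 1) ^ s + (-1) ^ s * ((q : ℤ) - 1)) / (q : ℤ)

/-- `φ_s = ((q-1)^s - ψ_s)/(q-1)` (an exact integer division). -/
def phi (q s : ℕ) : ℤ := (((q : ℤ) - 1) ^ s - psi q s) / ((q : ℤ) - 1)

/-- Auxiliary recursion for `A_{r_1,…,r_l}`, taking the list in reversed order
`[r_l, r_{l-1}, …, r_1]`. -/
def Arev (q : ℕ) : List ℕ → ℤ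
  | [] => 0
  | [r] => psi q r
  | r :: rs => psi q rs.sum * phi q r + (-1) ^ r * Arev q rs

/-- `A_{r_1,…,r_l}` for the list `[r_1, …, r_l]`.  Note that appending a final entry `t`
(possibly `t = 0`) realizes `A_{r_1,…,r_l,t} = ψ_{r_1+⋯+r_l}·φ_t + (-1)^t·A_{r_1,…,r_l}`,
with `A_{r_1,…,r_l,0} = A_{r_1,…,r_l}`. -/
def Atup (q : ℕ) (l : List ℕ) : ℤ := Arev q l.reverse

/-!
For a linear form `∑ b i * x i` with all coefficients nonzero, the equation `∑ b i * x i = c` in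
nonzero `x i` has `ψ` solutions if `c = 0` and `φ` otherwise, and `ψ_r = φ_r + (-1)^r`.

To count the common zeros of `∑ a i * x i` and `∑ x i` with all `x i` nonzero, split off a block
`{i | a i = v}` of `r` coordinates. Modulo `∑ x i` the form becomes `∑ (a i - v) * x i`, which does
not involve the block and has only nonzero coefficients outside it, so it has `ψ` zeros there; each
of them prescribes the sum over the block, which leaves `φ_r` choices, or `φ_r + (-1)^r` when that
sum is `0`. This is the recursion defining `A`, the coordinates with coefficient `0` being its last
block.

The points to be counted are the `q^(k-1)` zeros of `f` except those where `x_1, …, x_h` and their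
sum are all nonzero, and the latter are a difference of two counts over nonzero coordinates.
-/

open Finset

theorem mul_psi (q s : ℕ) :
    (q : ℤ) * psi q s = ((q : ℤ) - 1) ^ s + (-1) ^ s * ((q : ℤ) - 1) := by
  refine Int.mul_ediv_cancel' ?_
  have hdvd : (q : ℤ) ∣ ((q : ℤ) - 1) ^ s - (-1) ^ s := by
    simpa using sub_dvd_pow_sub_pow ((q : ℤ) - 1) (-1) s
  have hsplit : ((q : ℤ) - 1) ^ s + (-1) ^ s * ((q : ℤ) - 1) =
      (((q : ℤ) - 1) ^ s - (-1) ^ s) + (-1) ^ s * q := by ring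
  rw [hsplit]
  exact dvd_add hdvd (dvd_mul_left _ _)

theorem phi_eq_psi_sub {q : ℕ} (hq : q ≠ 1) (s : ℕ) : phi q s = psi q s - (-1) ^ s := by
  have hnum : ((q : ℤ) - 1) ^ s - psi q s = ((q : ℤ) - 1) * (psi q s - (-1) ^ s) := by
    linear_combination -mul_psi q s
  have hq' : (q : ℤ) - 1 ≠ 0 := sub_ne_zero.mpr (mod_cast hq)
  rw [phi, hnum, Int.mul_ediv_cancel_left _ hq']

theorem psi_zero {q : ℕ} (hq : q ≠ 0) : psi q 0 = 1 := by
  simp [psi, hq]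

theorem psi_succ {q : ℕ} (hq : q ≠ 0) (s : ℕ) : psi q (s + 1) = ((q : ℤ) - 1) ^ s - psi q s := by
  refine mul_left_cancel₀ (Nat.cast_ne_zero.mpr hq : (q : ℤ) ≠ 0) ?_
  linear_combination mul_psi q (s + 1) + mul_psi q s

theorem phi_zero {q : ℕ} (hq : q ≠ 0) : phi q 0 = 0 := by
  simp [phi, psi_zero hq]

theorem phi_succ {q : ℕ} (hq : 1 < q) (s : ℕ) : phi q (s + 1) = ((q : ℤ) - 1) ^ s - phi q s := by
  rw [phi_eq_psi_sub hq.ne', phi_eq_psi_sub hq.ne', psi_succ (by lia)]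
  ring

theorem Arev_cons (q r : ℕ) {L : List ℕ} (hL : L ≠ []) :
    Arev q (r :: L) = psi q L.sum * phi q r + (-1) ^ r * Arev q L := by
  cases L with
  | nil => contradiction
  | cons => rfl

theorem card_filter_comp_of_forall_mem_range {ι κ : Type*} [Fintype ι] [Fintype κ] (e : κ ↪ ι)
    (p : ι → Prop) [DecidablePred p] (hp : ∀ i, p i → i ∈ Set.range e) :
    #{j | p (e j)} = #{i | p i} := by
  rw [← card_map e]
  congr 1
  ext i
  simp only [mem_map, mem_filter_univ]
  refine ⟨?_, fun hi => ?_⟩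
  · rintro ⟨j, hj, rfl⟩
    exact hj
  · obtain ⟨j, rfl⟩ := hp i hi
    exact ⟨j, hi, rfl⟩

theorem sum_map_card_fiber {ι R : Type*} [Fintype ι] [DecidableEq R] (a : ι → R) {vals : List R}
    (hnodup : vals.Nodup) (hmem : ∀ i, a i ∈ vals) :
    (vals.map fun v => #{i | a i = v}).sum = Fintype.card ι := by
  rw [← List.sum_toFinset _ hnodup, ← card_univ]
  exact (card_eq_sum_card_fiberwise fun i _ => by simpa using hmem i).symm

theorem sum_subtype_eq_sum_of_forall_not {ι R : Type*} [Fintype ι] [AddCommMonoid R]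
    {p : ι → Prop} [DecidablePred p] {f : ι → R} (hf : ∀ i, ¬p i → f i = 0) :
    ∑ i : {i // p i}, f i = ∑ i, f i :=
  Fintype.sum_of_injective _ Subtype.val_injective _ _ (fun i hi => hf i (by simpa using hi))
    fun _ => rfl

section Counting

variable {ι κ M : Type*} [Fintype ι] [DecidableEq ι] [Fintype κ] [DecidableEq κ] [Fintype M]

theorem card_filter_pi_eq_sum_card_filter (p : ι → Prop) [DecidablePred p]
    (P : ({i // p i} → M) → ({i // ¬p i} → M) → Prop) [∀ y z, Decidable (P y z)] :
    #{x : ι → M | P (fun i => x i) (fun i => x i)} = ∑ z, #{y | P y z} := by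
  calc #{x : ι → M | P (fun i => x i) (fun i => x i)}
      = #{yz : ({i // p i} → M) × ({i // ¬p i} → M) | P yz.1 yz.2} :=
        card_equiv (Equiv.piEquivPiSubtypeProd p fun _ => M) fun _ => by
          simp [Equiv.piEquivPiSubtypeProd]
    _ = ∑ z, #{y | P y z} := by
        simp only [card_filter, Fintype.sum_prod_type_right]

theorem card_filter_comp_embedding (e : κ ↪ ι) (P : (κ → M) → Prop) [DecidablePred P] :
    #{x : ι → M | P (x ∘ e)} =
      Fintype.card M ^ (Fintype.card ι - Fintype.card κ) * #{y | P y} := by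
  classical
  let E : κ ≃ {i // i ∈ Set.range e} := Equiv.ofInjective e e.injective
  have hcard : Fintype.card {i // i ∉ Set.range e} = Fintype.card ι - Fintype.card κ := by
    rw [Fintype.card_subtype_compl, ← Fintype.card_congr E]
  have hrange : #{y : {i // i ∈ Set.range e} → M | P (y ∘ E)} = #{y | P y} :=
    card_equiv (E.symm.arrowCongr (Equiv.refl M)) fun _ => by
      simp only [mem_filter_univ]
      rfl
  have hsplit : #{x : ι → M | P (x ∘ e)} =
      ∑ _ : {i // i ∉ Set.range e} → M, #{y : {i // i ∈ Set.range e} → M | P (y ∘ E)} := by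
    convert card_filter_pi_eq_sum_card_filter (M := M) (· ∈ Set.range e) fun y _ => P (y ∘ E)
    rfl
  rw [hsplit, hrange, sum_const, card_univ, Fintype.card_fun, hcard, smul_eq_mul]

end Counting

section GroupWithZero

variable {G₀ ι : Type*} [GroupWithZero G₀] [Fintype G₀] [DecidableEq G₀] [Fintype ι]
  [DecidableEq ι]

theorem natCast_card_pi_units :
    (Fintype.card (ι → G₀ˣ) : ℤ) = ((Fintype.card G₀ : ℤ) - 1) ^ Fintype.card ι := by
  rw [Fintype.card_fun, Fintype.card_units, Nat.cast_pow, Nat.cast_sub Fintype.card_pos,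
    Nat.cast_one]

theorem card_filter_ne_zero_eq_card_filter_units (P : (ι → G₀) → Prop) [DecidablePred P] :
    #{x : ι → G₀ | P x ∧ ∀ i, x i ≠ 0} = #{y : ι → G₀ˣ | P fun i => y i} := by
  refine card_bij' (fun x hx i => Units.mk0 (x i) ((mem_filter.mp hx).2.2 i))
    (fun y _ i => y i) ?_ ?_ ?_ ?_ <;>
  simp +contextual

theorem card_units_mul_eq {b : G₀} (hb : b ≠ 0) (c : G₀) :
    #{u : G₀ˣ | b * u = c} = if c = 0 then 0 else 1 := by
  split_ifs with hc
  · simp [hc, hb]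
  · rw [card_eq_one]
    refine ⟨Units.mk0 (b⁻¹ * c) (mul_ne_zero (inv_ne_zero hb) hc), ?_⟩
    ext u
    simp [Units.ext_iff, eq_inv_mul_iff_mul_eq₀ hb]

end GroupWithZero

section Units

variable {F ι κ : Type*} [Field F] [Fintype F] [DecidableEq F] [Fintype ι] [DecidableEq ι]
  [Fintype κ] [DecidableEq κ]

theorem card_units_sum_mul_eq_add_card_subtype_ne (b : ι → F) (c : F) {i₀ : ι} (hb : b i₀ ≠ 0) :
    #{x : ι → Fˣ | ∑ i, b i * x i = c} +
        #{x : {i // i ≠ i₀} → Fˣ | ∑ i : {i // i ≠ i₀}, b i * x i = c} =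
      Fintype.card ({i // i ≠ i₀} → Fˣ) := by
  have hsplit : #{x : ι → Fˣ | ∑ i, b i * x i = c} =
      #{ux : Fˣ × ({i // i ≠ i₀} → Fˣ) |
        b i₀ * ux.1 + ∑ i : {i // i ≠ i₀}, b i * ux.2 i = c} :=
    card_equiv (Equiv.funSplitAt i₀ Fˣ) fun x => by
      simp [Fintype.sum_eq_add_sum_subtype_ne _ i₀, Equiv.funSplitAt, Equiv.piSplitAt]
  have hfiber (x : {i // i ≠ i₀} → Fˣ) :
      #{u : Fˣ | b i₀ * u + ∑ i : {i // i ≠ i₀}, b i * x i = c} =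
        if ∑ i : {i // i ≠ i₀}, b i * x i = c then 0 else 1 := by
    simp_rw [← eq_sub_iff_add_eq, card_units_mul_eq hb, sub_eq_zero, eq_comm (a := c)]
  have hcompl : #{x : ι → Fˣ | ∑ i, b i * x i = c} =
      #{x : {i // i ≠ i₀} → Fˣ | ¬∑ i : {i // i ≠ i₀}, b i * x i = c} := by
    rw [hsplit, card_filter, Fintype.sum_prod_type_right]
    simp_rw [← card_filter, hfiber]
    rw [card_filter]
    simp only [ite_not]
  rw [hcompl, add_comm, card_filter_add_card_filter_not, card_univ]

theorem card_units_sum_mul_eq (b : ι → F) (hb : ∀ i, b i ≠ 0) (c : F) :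
    (#{x : ι → Fˣ | ∑ i, b i * x i = c} : ℤ) =
      if c = 0 then psi (Fintype.card F) (Fintype.card ι)
      else phi (Fintype.card F) (Fintype.card ι) := by
  have hq : 1 < Fintype.card F := Fintype.one_lt_card
  induction hn : Fintype.card ι generalizing ι with
  | zero =>
    have := Fintype.card_eq_zero_iff.mp hn
    have hq0 : Fintype.card F ≠ 0 := by lia
    simp [psi_zero hq0, phi_zero hq0, filter_const, eq_comm (a := c), apply_ite]
  | succ n ih =>
    obtain ⟨i₀⟩ : Nonempty ι := Fintype.card_pos_iff.mp (by lia)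
    have hcard : Fintype.card {i // i ≠ i₀} = n := by simp [hn]
    have hrec := card_units_sum_mul_eq_add_card_subtype_ne b c (hb i₀)
    zify at hrec
    rw [natCast_card_pi_units, hcard,
      ih (fun i : {i // i ≠ i₀} => b i) (fun i => hb i) hcard] at hrec
    rw [psi_succ (by lia), phi_succ hq, eq_sub_of_add_eq hrec]
    split_ifs <;> rfl

theorem card_units_sum_eq (c : F) :
    (#{x : ι → Fˣ | ∑ i, (x i : F) = c} : ℤ) =
      if c = 0 then psi (Fintype.card F) (Fintype.card ι)
      else phi (Fintype.card F) (Fintype.card ι) := by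
  simpa only [one_mul] using card_units_sum_mul_eq (fun _ => 1) (fun _ => one_ne_zero) c

theorem card_units_sum_mul_eq_zero (a : ι → F) :
    (#{x : ι → Fˣ | ∑ i, a i * x i = 0} : ℤ) =
      ((Fintype.card F : ℤ) - 1) ^ #{i | a i = 0} * psi (Fintype.card F) #{i | a i ≠ 0} := by
  have hsupport (x : ι → Fˣ) : ∑ i, a i * x i = ∑ i : {i // a i ≠ 0}, a i * x i :=
    (sum_subtype_eq_sum_of_forall_not fun i hi => by simp [not_not.mp hi]).symm
  have hsplit : #{x : ι → Fˣ | ∑ i, a i * x i = 0} = ∑ _ : {i // ¬a i ≠ 0} → Fˣ,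
      #{y : {i // a i ≠ 0} → Fˣ | ∑ i : {i // a i ≠ 0}, a i * y i = 0} := by
    simp_rw [hsupport]
    exact card_filter_pi_eq_sum_card_filter (a · ≠ 0) fun (y : {i // a i ≠ 0} → Fˣ) _ =>
      ∑ i : {i // a i ≠ 0}, a i * (y i : F) = 0
  rw [hsplit, sum_const, card_univ, smul_eq_mul, Nat.cast_mul, natCast_card_pi_units,
    card_units_sum_mul_eq (fun i : {i // a i ≠ 0} => a i) (fun i => i.2), if_pos rfl,
    Fintype.card_subtype, Fintype.card_subtype]
  simp only [not_not]

theorem card_units_common_zeros_eq_sum (a : ι → F) (v : F) :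
    #{x : ι → Fˣ | ∑ i, a i * x i = 0 ∧ ∑ i, (x i : F) = 0} =
      ∑ z : {i // a i ≠ v} → Fˣ, #{y : {i // a i = v} → Fˣ |
        ∑ i : {i // a i ≠ v}, (a i - v) * z i = 0 ∧ ∑ i, (y i : F) = -∑ i, (z i : F)} := by
  have hsupport (x : ι → Fˣ) :
      ∑ i : {i // a i ≠ v}, (a i - v) * x i = ∑ i, a i * x i - v * ∑ i, (x i : F) := by
    rw [sum_subtype_eq_sum_of_forall_not (f := fun i => (a i - v) * (x i : F))
      fun i hi => by simp [not_not.mp hi]]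
    simp only [sub_mul, sum_sub_distrib, mul_sum]
  have hsum (x : ι → Fˣ) : ∑ i : {i // a i = v}, (x i : F) = -∑ i : {i // a i ≠ v}, (x i : F) ↔
      ∑ i, (x i : F) = 0 := by
    rw [eq_neg_iff_add_eq_zero, Fintype.sum_subtype_add_sum_subtype (a · = v) fun i => (x i : F)]
  refine .trans (congrArg card (filter_congr fun x _ => ?_)) <|
    card_filter_pi_eq_sum_card_filter (a · = v)
      fun (y : {i // a i = v} → Fˣ) (z : {i // a i ≠ v} → Fˣ) =>
        ∑ i : {i // a i ≠ v}, (a i - v) * z i = 0 ∧ ∑ i, (y i : F) = -∑ i, (z i : F)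
  rw [hsupport, hsum]
  exact and_congr_left fun hx => by rw [hx, mul_zero, sub_zero]

theorem card_units_common_zeros_eq_psi_mul_phi_add (a : ι → F) (v : F) :
    (#{x : ι → Fˣ | ∑ i, a i * x i = 0 ∧ ∑ i, (x i : F) = 0} : ℤ) =
      psi (Fintype.card F) #{i | a i ≠ v} * phi (Fintype.card F) #{i | a i = v} +
        (-1) ^ #{i | a i = v} * #{z : {i // a i ≠ v} → Fˣ |
          ∑ i : {i // a i ≠ v}, a i * z i = 0 ∧ ∑ i, (z i : F) = 0} := by
  have hfiber (z : {i // a i ≠ v} → Fˣ) :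
      (#{y : {i // a i = v} → Fˣ | ∑ i : {i // a i ≠ v}, (a i - v) * z i = 0 ∧
          ∑ i, (y i : F) = -∑ i, (z i : F)} : ℤ) =
        if ∑ i : {i // a i ≠ v}, (a i - v) * z i = 0 then
          phi (Fintype.card F) #{i | a i = v} +
            (-1) ^ #{i | a i = v} * if ∑ i, (z i : F) = 0 then 1 else 0
        else 0 := by
    by_cases hz : ∑ i : {i // a i ≠ v}, (a i - v) * (z i : F) = 0
    · simp only [hz, true_and, if_true, card_units_sum_eq, neg_eq_zero, Fintype.card_subtype]
      split_ifs <;> simp [phi_eq_psi_sub Fintype.one_lt_card.ne']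
    · simp [hz]
  have hzeros (z : {i // a i ≠ v} → Fˣ) :
      ∑ i : {i // a i ≠ v}, (a i - v) * z i = 0 ∧ ∑ i, (z i : F) = 0 ↔
        ∑ i : {i // a i ≠ v}, a i * z i = 0 ∧ ∑ i, (z i : F) = 0 :=
    and_congr_left fun hz => by
      simp only [sub_mul, sum_sub_distrib, ← mul_sum, hz, mul_zero, sub_zero]
  rw [card_units_common_zeros_eq_sum a v, Nat.cast_sum]
  simp_rw [hfiber]
  rw [← sum_filter, sum_add_distrib, sum_const, ← mul_sum, sum_boole, filter_filter, nsmul_eq_mul,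
    card_units_sum_mul_eq (fun i : {i // a i ≠ v} => a i - v) (fun i => sub_ne_zero.mpr i.2),
    if_pos rfl, Fintype.card_subtype]
  simp only [hzeros]

theorem card_units_common_zeros_eq_Arev (a : ι → F) {vals : List F} (hne : vals ≠ [])
    (hnodup : vals.Nodup) (hmem : ∀ i, a i ∈ vals) :
    (#{x : ι → Fˣ | ∑ i, a i * x i = 0 ∧ ∑ i, (x i : F) = 0} : ℤ) =
      Arev (Fintype.card F) (vals.map fun v => #{i | a i = v}) := by
  induction vals generalizing ι with
  | nil => contradiction
  | cons v vals ih =>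
    obtain rfl | hvals := eq_or_ne vals []
    · have ha (i : ι) : a i = v := by simpa using hmem i
      have hzeros (x : ι → Fˣ) :
          ∑ i, a i * x i = 0 ∧ ∑ i, (x i : F) = 0 ↔ ∑ i, (x i : F) = 0 := by
        simp +contextual [ha, ← mul_sum]
      simp only [hzeros, card_units_sum_eq, if_true]
      simp [ha, Arev]
    · obtain ⟨hv, hnodup'⟩ := List.nodup_cons.mp hnodup
      have hmem' (i : {i // a i ≠ v}) : a i ∈ vals := (List.mem_cons.mp (hmem i)).resolve_left i.2
      have hfiber : (vals.map fun w => #{i : {i // a i ≠ v} | a i = w}) =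
          vals.map fun w => #{i | a i = w} := by
        refine List.map_congr_left fun w hw => ?_
        refine card_filter_comp_of_forall_mem_range (.subtype _) (a · = w) fun i hi => ?_
        exact ⟨⟨i, fun hiv => hv (hiv ▸ hi ▸ hw)⟩, rfl⟩
      rw [card_units_common_zeros_eq_psi_mul_phi_add a v,
        ih (fun i : {i // a i ≠ v} => a i) hvals hnodup' hmem', List.map_cons,
        Arev_cons _ _ (by simpa using hvals), ← hfiber,
        sum_map_card_fiber (fun i : {i // a i ≠ v} => a i) hnodup' hmem', Fintype.card_subtype]

theorem card_units_common_zeros_eq_Atup (a : ι → F) {vals : List F} (hne : vals ≠ [])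
    (hnodup : vals.Nodup) (hmem : ∀ i, a i ∈ vals) :
    (#{x : ι → Fˣ | ∑ i, a i * x i = 0 ∧ ∑ i, (x i : F) = 0} : ℤ) =
      Atup (Fintype.card F) (vals.map fun v => #{i | a i = v}) := by
  rw [card_units_common_zeros_eq_Arev a (List.reverse_ne_nil_iff.mpr hne)
    (List.nodup_reverse.mpr hnodup) fun i => List.mem_reverse.mpr (hmem i), List.map_reverse, Atup]

theorem card_sum_mul_eq_zero (a : ι → F) (ha : a ≠ 0) :
    #{x : ι → F | ∑ i, a i * x i = 0} = Fintype.card F ^ (Fintype.card ι - 1) := by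
  let f : Module.Dual F (ι → F) := Fintype.linearCombination F a
  have hf : f ≠ 0 := by
    obtain ⟨i, hi⟩ := Function.ne_iff.mp ha
    refine fun hf => hi ?_
    simpa [f, Fintype.linearCombination_apply_single] using LinearMap.congr_fun hf (Pi.single i 1)
  have hfinrank := Module.Dual.finrank_ker_add_one_of_ne_zero hf
  rw [Module.finrank_fintype_fun_eq_card] at hfinrank
  rw [← hfinrank, Nat.add_sub_cancel, ← Nat.card_eq_fintype_card, ← Module.natCard_eq_pow_finrank,
    Nat.subtype_card]
  simp [f, Fintype.linearCombination_apply, mul_comm]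

theorem card_sum_mul_eq_zero_and_mul_prod_eq_zero (e : κ ↪ ι) (a : ι → F) (ha : a ≠ 0)
    (hsupp : ∀ i ∉ Set.range e, a i = 0) :
    (#{x : ι → F | ∑ i, a i * x i = 0 ∧ (∑ j, x (e j)) * ∏ j, x (e j) = 0} : ℤ) =
      (Fintype.card F : ℤ) ^ (Fintype.card ι - 1) -
        (Fintype.card F : ℤ) ^ (Fintype.card ι - Fintype.card κ) *
          (#{y : κ → Fˣ | ∑ j, a (e j) * y j = 0} -
            #{y : κ → Fˣ | ∑ j, a (e j) * y j = 0 ∧ ∑ j, (y j : F) = 0}) := by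
  have hrestrict (x : ι → F) : ∑ i, a i * x i = ∑ j, a (e j) * x (e j) :=
    (Fintype.sum_of_injective e e.injective _ _ (fun i hi => by rw [hsupp i hi, zero_mul])
      fun _ => rfl).symm
  have hunits : #{x : ι → F | ∑ i, a i * x i = 0 ∧ ¬(∑ j, x (e j)) * ∏ j, x (e j) = 0} =
      Fintype.card F ^ (Fintype.card ι - Fintype.card κ) *
        #{y : κ → Fˣ | ∑ j, a (e j) * y j = 0 ∧ ¬∑ j, (y j : F) = 0} := by
    rw [← card_filter_ne_zero_eq_card_filter_units fun y => ∑ j, a (e j) * y j = 0 ∧ ¬∑ j, y j = 0,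
      ← card_filter_comp_embedding e]
    simp only [hrestrict, mul_eq_zero, prod_eq_zero_iff, mem_univ, true_and, not_or, not_exists,
      Function.comp_apply, and_assoc]
  have hcompl := card_filter_add_card_filter_not (s := {x : ι → F | ∑ i, a i * x i = 0})
    fun x => (∑ j, x (e j)) * ∏ j, x (e j) = 0
  have hcompl_units := card_filter_add_card_filter_not
    (s := {y : κ → Fˣ | ∑ j, a (e j) * y j = 0}) fun y => ∑ j, (y j : F) = 0
  rw [filter_filter, filter_filter, hunits, card_sum_mul_eq_zero a ha] at hcompl
  rw [filter_filter, filter_filter] at hcompl_units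
  zify at hcompl hcompl_units
  rw [← hcompl, ← hcompl_units]
  ring

end Units

theorem stmt6_general {F κ ι : Type*} [Field F] [Fintype F] [Fintype κ] [Fintype ι]
    (q : ℕ) (hF : Fintype.card F = q) (e : κ ↪ ι) (a : ι → F) (hane : ∃ i, a i ≠ 0)
    (hsupp : ∀ i ∉ Set.range e, a i = 0) {l : ℕ} (α : Fin l → F) (hαinj : Function.Injective α)
    (hα0 : ∀ m, α m ≠ 0) (hcover : ∀ i, a i ≠ 0 → ∃ m, a i = α m)
    (r : Fin l → ℕ) (hr : ∀ m, r m = Nat.card {i // a i = α m}) (s : ℕ) (hs : s = ∑ m, r m) :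
    (Nat.card {x : ι → F // (∑ i, a i * x i = 0) ∧
        (∑ j, x (e j)) * ∏ j, x (e j) = 0} : ℤ) =
      (q : ℤ) ^ (Fintype.card ι - 1)
        - ((q : ℤ) - 1) ^ (Fintype.card κ - s) * (q : ℤ) ^ (Fintype.card ι - Fintype.card κ) *
            psi q s
          + (q : ℤ) ^ (Fintype.card ι - Fintype.card κ) *
            Atup q (List.ofFn r ++ [Fintype.card κ - s]) := by
  classical
  subst hF
  have hmult (m : Fin l) : #{j | a (e j) = α m} = r m := by
    rw [hr, Nat.subtype_card _ fun _ => mem_filter_univ _]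
    refine card_filter_comp_of_forall_mem_range e (a · = α m) fun i hi => ?_
    by_contra hi'
    exact hα0 m (hi ▸ hsupp i hi')
  have hnodup : (List.ofFn α ++ [0]).Nodup := by
    simp [List.nodup_append, List.nodup_ofFn, hαinj, hα0]
  have hmem (j : κ) : a (e j) ∈ List.ofFn α ++ [0] := by
    simpa [or_iff_not_imp_right, eq_comm] using hcover (e j)
  have hmap : ((List.ofFn α ++ [0]).map fun v => #{j | a (e j) = v}) =
      List.ofFn r ++ [#{j | a (e j) = 0}] := by
    simp only [List.map_append, List.map_ofFn, Function.comp_def, hmult, List.map_singleton]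
  have hsum : s + #{j | a (e j) = 0} = Fintype.card κ := by
    rw [← sum_map_card_fiber (fun j => a (e j)) hnodup hmem, hmap, List.sum_append, List.sum_ofFn,
      List.sum_singleton, hs]
  have hzero : #{j | a (e j) = 0} = Fintype.card κ - s := by lia
  have hne : #{j | a (e j) ≠ 0} = s := by
    have := card_filter_add_card_filter_not (s := univ) fun j => a (e j) = 0
    rw [card_univ] at this
    lia
  rw [Nat.subtype_card _ fun _ => mem_filter_univ _,
    card_sum_mul_eq_zero_and_mul_prod_eq_zero e a (Function.ne_iff.mpr hane) hsupp,
    card_units_sum_mul_eq_zero, card_units_common_zeros_eq_Atup _ (by simp) hnodup hmem, hmap,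
    hzero, hne]
  ring

theorem stmt6 (q : ℕ) (F : Type*) [Field F] [Fintype F] (hF : Fintype.card F = q)
    (k h : ℕ) (hh : 4 ≤ h) (hhk : h ≤ k)
    (a : Fin k → F) (hane : ∃ i, a i ≠ 0) (hsupp : ∀ i : Fin k, h ≤ (i : ℕ) → a i = 0)
    (l : ℕ) (hl : 1 ≤ l) (α : Fin l → F) (hαinj : Function.Injective α) (hα0 : ∀ i, α i ≠ 0)
    (hcover : ∀ i : Fin k, a i ≠ 0 → ∃ m, a i = α m)
    (r : Fin l → ℕ) (hr : ∀ m, r m = Nat.card {i : Fin k // a i = α m}) (hr1 : ∀ m, 1 ≤ r m)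
    (s : ℕ) (hs : s = ∑ m, r m) (hs1 : 1 ≤ s) (hsh : s ≤ h) :
    (Nat.card {x : Fin k → F // (∑ i, a i * x i = 0) ∧
        (∑ i : Fin h, x (Fin.castLE hhk i)) * ∏ i : Fin h, x (Fin.castLE hhk i) = 0} : ℤ)
      = (q : ℤ) ^ (k - 1) - ((q : ℤ) - 1) ^ (h - s) * (q : ℤ) ^ (k - h) * psi q s
          + (q : ℤ) ^ (k - h) * Atup q (List.ofFn r ++ [h - s]) := by
  simpa only [Fintype.card_fin, Fin.castLEEmb_apply] using
    stmt6_general q hF (Fin.castLEEmb hhk) a hane (by simpa using hsupp)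
      α hαinj hα0 hcover r hr s hs
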